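/- Let G = (V, E) be a weighted digraph, let s ∈ V, let X ⊆ V with s ∉ X, let c ≥ 1 be a real number, and let d : V → [0, ∞] satisfy dist_G(s, u) ≤ d(u) ≤ c · dist_G(s, u) for every u ∈ V ∖ X. For t ∈ X define D(t) ∈ [0, ∞] as the infimum, over all edges e = uv ∈ E with u ∉ X and v ∈ X and all paths P = v → t in G all of whose vertices lie in X, of the quantity d(u) + w(e) + w(P). Then for every t ∈ X: (a) dist_G(s, t) ≤ D(t); and (b) for every path Q = s → t in G, D(t) ≤ c · w(Q); consequently D(t) ≤ c · dist_G(s, t). -/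

import Mathlib

/-!
For the lower bound, an edge `a → b` entering `X` and a walk `b → t` extend every walk `s → a`,
so the triangle inequality and `dist(s, a) ≤ d a` bound every candidate for `D(t)` from below by
`dist(s, t)`.

For the upper bound, cut a walk `Q` from `s ∉ X` to `t ∈ X` at its last vertex `a` outside `X`:
it becomes a walk `s → a`, an edge `a → b` entering `X`, and a walk `b → t` inside `X`. The last two
pieces form a candidate for `D(t)`, whose value is at most `c * w(Q)`: the bound
`d a ≤ c * dist(s, a)` accounts for the first piece, and `1 ≤ c` for the others.
-/

open scoped ENNReal NNReal

/-- `IsWalk E u l v` : the list of vertices `l` is a path (walk) from `u` to `v`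
in the digraph with edge set `E`; consecutive vertices must form edges.
A single-vertex list `[u]` is the empty path from `u` to `u`. -/
def IsWalk {V : Type*} (E : Set (V × V)) (u : V) (l : List V) (v : V) : Prop :=
  l ≠ [] ∧ l.head? = some u ∧ l.getLast? = some v ∧
    l.Chain' (fun a b => (a, b) ∈ E)

/-- The weight (in `[0,∞]`) of a walk given by its vertex list: the sum of the
(nonnegative) weights of the consecutive pairs. -/
noncomputable def walkWeightE {V : Type*} (w : V × V → ℝ≥0) (l : List V) : ℝ≥0∞ :=
  ((l.zip l.tail).map (fun e => (w e : ℝ≥0∞))).sum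

/-- The distance from `u` to `v`: the infimum of the weights of all paths
`u → v`; equals `∞` if there is no such path. -/
noncomputable def eDist {V : Type*} (E : Set (V × V)) (w : V × V → ℝ≥0)
    (u v : V) : ℝ≥0∞ :=
  ⨅ (l : List V) (_ : IsWalk E u l v), walkWeightE w l

section Walk

variable {V : Type*} {E : Set (V × V)} {w : V × V → ℝ≥0} {u v a b : V} {l l₁ l₂ : List V}

theorem isWalk_iff : IsWalk E u l v ↔
    l.head? = some u ∧ l.getLast? = some v ∧ l.IsChain (fun x y => (x, y) ∈ E) :=
  ⟨fun h => h.2, fun h => ⟨List.ne_nil_of_mem (List.mem_of_head? h.1), h⟩⟩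

theorem IsWalk.head?_eq (h : IsWalk E u l v) : l.head? = some u :=
  (isWalk_iff.1 h).1

theorem IsWalk.getLast?_eq (h : IsWalk E u l v) : l.getLast? = some v :=
  (isWalk_iff.1 h).2.1

theorem IsWalk.left_mem (h : IsWalk E u l v) : u ∈ l :=
  List.mem_of_head? h.head?_eq

theorem IsWalk.getLast_eq (h : IsWalk E u l v) (hl : l ≠ []) : l.getLast hl = v :=
  (List.getLast_eq_iff_getLast?_eq_some hl).2 h.getLast?_eq

theorem isWalk_append_iff (hl₁ : l₁ ≠ []) (hl₂ : l₂ ≠ []) :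
    IsWalk E u (l₁ ++ l₂) v ↔ ∃ a b, IsWalk E u l₁ a ∧ (a, b) ∈ E ∧ IsWalk E b l₂ v := by
  have hlast := List.getLast?_eq_some_getLast hl₁
  have hhead := List.head?_eq_some_head hl₂
  simp only [isWalk_iff, List.isChain_append, List.head?_append_of_ne_nil _ hl₁,
    List.getLast?_append_of_ne_nil _ hl₂, hlast, hhead, Option.mem_def, Option.some.injEq]
  grind

theorem IsWalk.exists_last_exit {X : Set V} (h : IsWalk E u l v) (hu : u ∉ X) (hv : v ∈ X) :
    ∃ l₁ l₂ a b, l = l₁ ++ l₂ ∧ IsWalk E u l₁ a ∧ (a, b) ∈ E ∧ IsWalk E b l₂ v ∧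
      a ∉ X ∧ ∀ x ∈ l₂, x ∈ X := by
  classical
  let p : V → Bool := fun x => decide (x ∈ X)
  have hsplit : l.rdropWhile p ++ l.rtakeWhile p = l := List.rdropWhile_append_rtakeWhile
  have hX : ∀ x ∈ l.rtakeWhile p, x ∈ X := fun x hx => by
    simpa [p] using List.mem_rtakeWhile_imp hx
  have houter : l.rdropWhile p ≠ [] := fun hnil =>
    hu (by simpa [p] using List.rdropWhile_eq_nil_iff.1 hnil u h.left_mem)
  have hinner : l.rtakeWhile p ≠ [] := fun hnil =>
    absurd hv (by simpa [p, h.getLast_eq] using List.rtakeWhile_eq_nil_iff.1 hnil h.1)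
  rw [← hsplit] at h
  obtain ⟨a, b, h₁, hab, h₂⟩ := (isWalk_append_iff houter hinner).1 h
  have ha : a ∉ X := by
    simpa [p, h₁.getLast_eq] using List.rdropWhile_last_not p l houter
  exact ⟨_, _, a, b, hsplit.symm, h₁, hab, h₂, ha, hX⟩

theorem walkWeightE_cons_cons :
    walkWeightE w (a :: b :: l) = w (a, b) + walkWeightE w (b :: l) := by
  simp [walkWeightE]

theorem walkWeightE_append (h₁ : l₁.getLast? = some a) (h₂ : l₂.head? = some b) :
    walkWeightE w (l₁ ++ l₂) = walkWeightE w l₁ + w (a, b) + walkWeightE w l₂ := by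
  obtain ⟨l₂, rfl⟩ := List.head?_eq_some_iff.1 h₂
  induction l₁ with
  | nil => simp at h₁
  | cons x l₁ ih =>
    cases l₁ with
    | nil =>
      obtain rfl : x = a := by simpa using h₁
      simp [walkWeightE]
    | cons y l₁ =>
      rw [List.getLast?_cons_cons] at h₁
      simp only [List.cons_append, walkWeightE_cons_cons, add_assoc] at ih ⊢
      rw [ih h₁]

theorem eDist_le_walkWeightE (h : IsWalk E u l v) : eDist E w u v ≤ walkWeightE w l :=
  iInf₂_le l h

theorem eDist_le_eDist_add_edge_add_eDist (hab : (a, b) ∈ E) :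
    eDist E w u v ≤ eDist E w u a + w (a, b) + eDist E w b v := by
  rw [add_right_comm, ← tsub_le_iff_right]
  refine ENNReal.le_iInf₂_add_iInf₂ fun l₁ h₁ l₂ h₂ => tsub_le_iff_right.2 ?_
  rw [add_right_comm, ← walkWeightE_append h₁.getLast?_eq h₂.head?_eq]
  exact eDist_le_walkWeightE ((isWalk_append_iff h₁.1 h₂.1).2 ⟨a, b, h₁, hab, h₂⟩)

theorem le_mul_eDist {c x : ℝ≥0∞} (hc₀ : c ≠ 0) (hc : c ≠ ∞)
    (h : ∀ l, IsWalk E u l v → x ≤ c * walkWeightE w l) : x ≤ c * eDist E w u v := by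
  simp only [eDist, ENNReal.mul_iInf_of_ne hc₀ hc]
  exact le_iInf₂ h

end Walk

section SearchDist

variable {V : Type*} {E : Set (V × V)} {w : V × V → ℝ≥0} {X : Set V} {d : V → ℝ≥0∞} {s t : V}

/-- The distance `D(t)` from the auxiliary source to `t` in the auxiliary graph on `X`: the source
has an edge of weight `d e.1 + w e` to `e.2` for each edge `e` of `E` entering `X`. The source is
not modelled as a vertex: its edge is recorded by `e`, and the rest of the path is a walk of `E`
inside `X`. -/
noncomputable def searchDist (E : Set (V × V)) (w : V × V → ℝ≥0) (X : Set V) (d : V → ℝ≥0∞)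
    (t : V) : ℝ≥0∞ :=
  ⨅ (e : V × V) (_ : e ∈ E) (_ : e.1 ∉ X) (_ : e.2 ∈ X)
    (l : List V) (_ : IsWalk E e.2 l t) (_ : ∀ x ∈ l, x ∈ X),
      d e.1 + (w e : ℝ≥0∞) + walkWeightE w l

theorem searchDist_le {a b : V} {l : List V} (hab : (a, b) ∈ E) (ha : a ∉ X)
    (hl : IsWalk E b l t) (hX : ∀ x ∈ l, x ∈ X) :
    searchDist E w X d t ≤ d a + w (a, b) + walkWeightE w l :=
  iInf₂_le_of_le (a, b) hab <| iInf₂_le_of_le ha (hX b hl.left_mem) <|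
    iInf₂_le_of_le l hl <| iInf_le _ hX

theorem eDist_le_searchDist (hd : ∀ u ∉ X, eDist E w s u ≤ d u) :
    eDist E w s t ≤ searchDist E w X d t := by
  refine le_iInf₂ fun e he => le_iInf₂ fun ha _ => le_iInf₂ fun l hl => le_iInf fun _ => ?_
  calc eDist E w s t
      ≤ eDist E w s e.1 + w e + eDist E w e.2 t := eDist_le_eDist_add_edge_add_eDist he
    _ ≤ d e.1 + w e + walkWeightE w l := by
      gcongr
      exacts [hd e.1 ha, eDist_le_walkWeightE hl]

theorem searchDist_le_mul_walkWeightE {c : ℝ≥0∞} {l : List V} (hc : 1 ≤ c) (hs : s ∉ X)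
    (ht : t ∈ X) (hd : ∀ u ∉ X, d u ≤ c * eDist E w s u) (hl : IsWalk E s l t) :
    searchDist E w X d t ≤ c * walkWeightE w l := by
  obtain ⟨l₁, l₂, a, b, rfl, h₁, hab, h₂, ha, hX⟩ := hl.exists_last_exit hs ht
  have hda : d a ≤ c * walkWeightE w l₁ :=
    (hd a ha).trans (by gcongr; exact eDist_le_walkWeightE h₁)
  calc searchDist E w X d t
      ≤ d a + w (a, b) + walkWeightE w l₂ := searchDist_le hab ha h₂ hX
    _ ≤ c * walkWeightE w l₁ + c * w (a, b) + c * walkWeightE w l₂ := by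
      gcongr <;> exact le_mul_of_one_le_left zero_le hc
    _ = c * walkWeightE w (l₁ ++ l₂) := by
      rw [walkWeightE_append h₁.getLast?_eq h₂.head?_eq, mul_add, mul_add]

end SearchDist

theorem search_correctness_general {V : Type*}
    (E : Set (V × V)) (w : V × V → ℝ≥0) (s : V) (X : Set V) (hs : s ∉ X)
    (c : ℝ) (hc : 1 ≤ c) (d : V → ℝ≥0∞)
    (hd : ∀ u : V, u ∉ X →
      eDist E w s u ≤ d u ∧ d u ≤ ENNReal.ofReal c * eDist E w s u) :
    ∀ t ∈ X,
      eDist E w s t ≤ searchDist E w X d t ∧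
      (∀ l : List V, IsWalk E s l t →
        searchDist E w X d t ≤ ENNReal.ofReal c * walkWeightE w l) ∧
      searchDist E w X d t ≤ ENNReal.ofReal c * eDist E w s t := by
  intro t ht
  have hc' : 1 ≤ ENNReal.ofReal c := ENNReal.one_le_ofReal.2 hc
  have hwalk : ∀ l, IsWalk E s l t → searchDist E w X d t ≤ ENNReal.ofReal c * walkWeightE w l :=
    fun _ hl => searchDist_le_mul_walkWeightE hc' hs ht (fun u hu => (hd u hu).2) hl
  exact ⟨eDist_le_searchDist fun u hu => (hd u hu).1, hwalk,
    le_mul_eDist (zero_lt_one.trans_le hc').ne' ENNReal.ofReal_ne_top hwalk⟩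

theorem search_correctness {V : Type*} [Fintype V]
    (E : Set (V × V)) (w : V × V → ℝ≥0) (s : V) (X : Set V) (hs : s ∉ X)
    (c : ℝ) (hc : 1 ≤ c) (d : V → ℝ≥0∞)
    (hd : ∀ u : V, u ∉ X →
      eDist E w s u ≤ d u ∧ d u ≤ ENNReal.ofReal c * eDist E w s u)
    (D : V → ℝ≥0∞)
    (hD : ∀ t : V, D t =
      ⨅ (e : V × V) (_ : e ∈ E) (_ : e.1 ∉ X) (_ : e.2 ∈ X)
        (l : List V) (_ : IsWalk E e.2 l t) (_ : ∀ x ∈ l, x ∈ X),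
          d e.1 + (w e : ℝ≥0∞) + walkWeightE w l) :
    ∀ t ∈ X,
      eDist E w s t ≤ D t ∧
      (∀ l : List V, IsWalk E s l t → D t ≤ ENNReal.ofReal c * walkWeightE w l) ∧
      D t ≤ ENNReal.ofReal c * eDist E w s t := by
  obtain rfl : D = searchDist E w X d := funext hD
  exact search_correctness_general E w s X hs c hc d hd
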